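/- Let A, B, C be a nondegenerate triangle in the Euclidean plane with side lengths a = dist B C, b = dist C A, c = dist A B, incenter I (barycentric weights (a, b, c)), circumcenter O, and mittenpunkt Mi (barycentric weights (a(b+c−a), b(c+a−b), c(a+b−c))). Let A₁, A₂, A₃ be the arc midpoints: A₁ is the point of the circumcircle of ABC distinct from A and collinear with A and I, and similarly A₂ for B and A₃ for C. Then the symmedian (Lemoine) point of the mid-arc triangle A₁A₂A₃ — the barycentric combination of A₁, A₂, A₃ with weights (dist(A₂,A₃)², dist(A₃,A₁)², dist(A₁,A₂)²) — equals midpoint(Mi, I). -/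

import Mathlib

open EuclideanGeometry RealInnerProductSpace

/-- The barycentric combination of three points with weights `u, v, w`. -/
noncomputable def bary (P Q R : EuclideanSpace ℝ (Fin 2)) (u v w : ℝ) :
    EuclideanSpace ℝ (Fin 2) :=
  (u / (u + v + w)) • P + (v / (u + v + w)) • Q + (w / (u + v + w)) • R

/-- Evaluation of a two-variable real polynomial at a point of the plane. -/
noncomputable def mvEval (f : MvPolynomial (Fin 2) ℝ)
    (p : EuclideanSpace ℝ (Fin 2)) : ℝ :=
  MvPolynomial.eval (fun i => p i) f

/-!
The arc midpoint `A₁` is the midpoint of the incenter `I` and the excenter `Jₐ` opposite `A`: on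
the line `A I`, the second intersection with the sphere is determined by its parameter. Hence the
mid-arc triangle is the image of the excentral triangle under the homothety of center `I` and
ratio `1 / 2`. Symmedian points are carried along by similarities, so it suffices that the
symmedian point of the excentral triangle is the mittenpunkt. For this, the squared side lengths of
the excentral triangle are proportional to `a (b + c - a)`, `b (c + a - b)`, `c (a + b - c)`, and
since `(b + c - a) Jₐ = -a A + b B + c C`, the excenters and the vertices have the same barycentric
combination for these weights.
-/

namespace TriangleCenter

section CenterMass

variable {k E F ι : Type*} [Field k] [AddCommGroup E] [Module k E] [AddCommGroup F] [Module k F]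

theorem map_centerMass (f : E →ᵃ[k] F) {s : Finset ι} {w : ι → k} (hw : ∑ i ∈ s, w i ≠ 0)
    (z : ι → E) : f (s.centerMass w z) = s.centerMass w (f ∘ z) := by
  have hf (x : E) : f x = f.linear x + f 0 := congrFun f.decomp x
  rw [Finset.centerMass, Finset.centerMass, hf, map_smul, map_sum]
  simp only [Function.comp_apply, hf (z _), map_smul, smul_add, Finset.sum_add_distrib,
    ← Finset.sum_smul, inv_smul_smul₀ hw]

end CenterMass

section InnerProduct

variable {V : Type*} [NormedAddCommGroup V] [InnerProductSpace ℝ V]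

theorem norm_norm_smul_add_norm_smul_sq (x y : V) :
    ‖‖y‖ • x + ‖x‖ • y‖ ^ 2 = ‖x‖ * ‖y‖ * ((‖x‖ + ‖y‖) ^ 2 - ‖x - y‖ ^ 2) := by
  simp only [norm_add_sq_real, norm_sub_sq_real, norm_smul, norm_norm, real_inner_smul_left,
    real_inner_smul_right]
  ring

theorem norm_norm_smul_sub_norm_smul_sq (x y : V) :
    ‖‖y‖ • x - ‖x‖ • y‖ ^ 2 = ‖x‖ * ‖y‖ * (‖x - y‖ ^ 2 - (‖x‖ - ‖y‖) ^ 2) := by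
  simp only [norm_sub_sq_real, norm_smul, norm_norm, real_inner_smul_left,
    real_inner_smul_right]
  ring

theorem two_mul_inner_sub_of_dist_eq {O A B : V} (h : dist O A = dist O B) :
    2 * ⟪B - A, A - O⟫ = -dist A B ^ 2 := by
  have hsq : ‖B - O‖ ^ 2 = ‖A - O‖ ^ 2 := by
    rw [← dist_eq_norm', ← dist_eq_norm', h]
  rw [← sub_add_sub_cancel B A O, norm_add_sq_real, ← dist_eq_norm'] at hsq
  linarith

end InnerProduct

section Centers

variable {V : Type*} [NormedAddCommGroup V] [NormedSpace ℝ V]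

/-- The incenter of the triangle `A B C`, by its barycentric coordinates `(a, b, c)`. -/
noncomputable def incenter (A B C : V) : V :=
  Finset.univ.centerMass ![dist B C, dist C A, dist A B] ![A, B, C]

/-- The excenter of the triangle `A B C` opposite the vertex `A`, by its barycentric coordinates
`(-a, b, c)`. The other two excenters are `excenter B C A` and `excenter C A B`. -/
noncomputable def excenter (A B C : V) : V :=
  Finset.univ.centerMass ![-dist B C, dist C A, dist A B] ![A, B, C]

/-- The weights `(a (b + c - a), b (c + a - b), c (a + b - c))`, which are the barycentric
coordinates of the mittenpunkt of the triangle `A B C`. -/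
noncomputable def mittenpunktWeights (A B C : V) : Fin 3 → ℝ :=
  ![dist B C * (dist C A + dist A B - dist B C), dist C A * (dist A B + dist B C - dist C A),
    dist A B * (dist B C + dist C A - dist A B)]

/-- The mittenpunkt of the triangle `A B C`. -/
noncomputable def mittenpunkt (A B C : V) : V :=
  Finset.univ.centerMass (mittenpunktWeights A B C) ![A, B, C]

/-- The symmedian (Lemoine) point of the triangle `P Q R`, by its barycentric coordinates, the
squared side lengths. -/
noncomputable def symmedianPoint (P Q R : V) : V :=
  Finset.univ.centerMass ![dist Q R ^ 2, dist R P ^ 2, dist P Q ^ 2] ![P, Q, R]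

/-- A vector along the internal bisector of the triangle `A B C` at the vertex `A`. -/
noncomputable def bisectorVector (A B C : V) : V :=
  dist C A • (B - A) + dist A B • (C - A)

/-- A vector along the external bisector of the triangle `A B C` at the vertex `A`. -/
noncomputable def externalBisectorVector (A B C : V) : V :=
  dist C A • (B - A) - dist A B • (C - A)

theorem incenter_rotate (A B C : V) : incenter B C A = incenter A B C := by
  simp only [incenter, Finset.centerMass, Fin.sum_univ_three, Matrix.cons_val]
  module

theorem incenter_sub_vertex {A B C : V} (h : dist B C + dist C A + dist A B ≠ 0) :
    incenter A B C - A = (dist B C + dist C A + dist A B)⁻¹ • bisectorVector A B C := by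
  simp only [incenter, bisectorVector, Finset.centerMass, Fin.sum_univ_three, Matrix.cons_val]
  match_scalars <;> field

theorem smul_excenter {A B C : V} (h : dist C A + dist A B - dist B C ≠ 0) :
    (dist C A + dist A B - dist B C) • excenter A B C =
      -dist B C • A + dist C A • B + dist A B • C := by
  simp only [excenter, Finset.centerMass, Fin.sum_univ_three, Matrix.cons_val]
  rw [show -dist B C + dist C A + dist A B = dist C A + dist A B - dist B C by ring,
    smul_inv_smul₀ h]

theorem midpoint_incenter_excenter {A B C : V} (h : dist B C + dist C A + dist A B ≠ 0)
    (hA : dist C A + dist A B - dist B C ≠ 0) :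
    midpoint ℝ (incenter A B C) (excenter A B C) =
      ((dist C A + dist A B) /
        ((dist C A + dist A B) ^ 2 - dist B C ^ 2)) • bisectorVector A B C + A := by
  have hI := sub_eq_iff_eq_add.1 (incenter_sub_vertex h)
  have hJ := (eq_inv_smul_iff₀ hA).2 (smul_excenter hA)
  rw [hI, hJ, midpoint_eq_smul_add, bisectorVector, invOf_eq_inv,
    show (dist C A + dist A B) ^ 2 - dist B C ^ 2 =
      (dist B C + dist C A + dist A B) * (dist C A + dist A B - dist B C) by ring]
  match_scalars <;> field

theorem excenter_sub_excenter {A B C : V} (hB : dist A B + dist B C - dist C A ≠ 0)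
    (hC : dist B C + dist C A - dist A B ≠ 0) :
    excenter C A B - excenter B C A =
      (2 * dist B C / ((dist A B + dist B C - dist C A) * (dist B C + dist C A - dist A B))) •
        externalBisectorVector A B C := by
  have hJB := (eq_inv_smul_iff₀ hB).2 (smul_excenter hB)
  have hJC := (eq_inv_smul_iff₀ hC).2 (smul_excenter hC)
  rw [hJB, hJC, externalBisectorVector]
  match_scalars <;> field

theorem symmedianPoint_map {W : Type*} [NormedAddCommGroup W] [NormedSpace ℝ W] (f : V →ᵃ[ℝ] W)
    {r : ℝ} (hr : r ≠ 0) (hf : ∀ x y, dist (f x) (f y) = r * dist x y) {P Q : V} (hPQ : P ≠ Q)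
    (R : V) : symmedianPoint (f P) (f Q) (f R) = f (symmedianPoint P Q R) := by
  have hsum : ∑ i, ![dist Q R ^ 2, dist R P ^ 2, dist P Q ^ 2] i ≠ 0 := by
    have : 0 < dist P Q := dist_pos.2 hPQ
    simp only [Fin.sum_univ_three, Matrix.cons_val]
    positivity
  have hweights : ![dist (f Q) (f R) ^ 2, dist (f R) (f P) ^ 2, dist (f P) (f Q) ^ 2] =
      r ^ 2 • ![dist Q R ^ 2, dist R P ^ 2, dist P Q ^ 2] := by
    simp only [hf, mul_pow, Matrix.smul_cons, smul_eq_mul, Matrix.smul_empty]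
  have hpoints : ![f P, f Q, f R] = f ∘ ![P, Q, R] := by
    funext i
    fin_cases i <;> rfl
  rw [symmedianPoint, symmedianPoint, map_centerMass f hsum, hweights, hpoints,
    Finset.centerMass_smul_left _ _ (pow_ne_zero 2 hr)]

theorem symmedianPoint_midpoint (I : V) {P Q : V} (hPQ : P ≠ Q) (R : V) :
    symmedianPoint (midpoint ℝ I P) (midpoint ℝ I Q) (midpoint ℝ I R) =
      midpoint ℝ I (symmedianPoint P Q R) := by
  simp only [← homothety_inv_two]
  refine symmedianPoint_map _ (inv_ne_zero two_ne_zero) (fun x y => ?_) hPQ R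
  simp only [AffineMap.homothety_apply, dist_vadd_cancel_right, dist_smul₀,
    dist_vsub_cancel_right, norm_inv, Real.norm_ofNat]

end Centers

section AffineIndependent

theorem affineIndependent_rotate {k V P : Type*} [Ring k] [AddCommGroup V] [Module k V]
    [AddTorsor V P] {A B C : P} (h : AffineIndependent k ![A, B, C]) :
    AffineIndependent k ![B, C, A] :=
  h.comm_left.comm_right

theorem dist_pos_of_affineIndependent {k V P : Type*} [Ring k] [Nontrivial k] [AddCommGroup V]
    [Module k V] [MetricSpace P] [AddTorsor V P] {A B C : P}
    (h : AffineIndependent k ![A, B, C]) : 0 < dist A B :=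
  dist_pos.2 (h.injective.ne (by decide : (0 : Fin 3) ≠ 1))

theorem dist_add_dist_sub_dist_pos_of_affineIndependent {V P : Type*} [NormedAddCommGroup V]
    [NormedSpace ℝ V] [StrictConvexSpace ℝ V] [MetricSpace P] [NormedAddTorsor V P] {A B C : P}
    (h : AffineIndependent ℝ ![A, B, C]) : 0 < dist C A + dist A B - dist B C := by
  have hw : ¬ Wbtw ℝ C A B := fun hw =>
    affineIndependent_iff_not_collinear_set.1 h.reverse_of_three.comm_right hw.collinear
  rw [sub_pos, dist_comm B C]
  exact dist_lt_dist_add_dist_iff.2 hw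

end AffineIndependent

section ExcentralTriangle

variable {V : Type*} [NormedAddCommGroup V] [InnerProductSpace ℝ V] {A B C : V}

theorem norm_bisectorVector_sq (A B C : V) :
    ‖bisectorVector A B C‖ ^ 2 =
      dist A B * dist C A * ((dist C A + dist A B) ^ 2 - dist B C ^ 2) := by
  rw [bisectorVector, dist_eq_norm C A, dist_eq_norm' A B, norm_norm_smul_add_norm_smul_sq,
    sub_sub_sub_cancel_right, ← dist_eq_norm B C, add_comm ‖C - A‖]

theorem norm_externalBisectorVector_sq (A B C : V) :
    ‖externalBisectorVector A B C‖ ^ 2 =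
      dist A B * dist C A * (dist B C ^ 2 - (dist C A - dist A B) ^ 2) := by
  rw [externalBisectorVector, dist_eq_norm C A, dist_eq_norm' A B,
    norm_norm_smul_sub_norm_smul_sq, sub_sub_sub_cancel_right, ← dist_eq_norm B C, sub_sq_comm]

theorem two_mul_inner_bisectorVector {O : V} (hB : dist O A = dist O B)
    (hC : dist O A = dist O C) :
    2 * ⟪bisectorVector A B C, A - O⟫ = -(dist A B * dist C A * (dist C A + dist A B)) := by
  have h₁ := two_mul_inner_sub_of_dist_eq hB
  have h₂ := two_mul_inner_sub_of_dist_eq hC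
  rw [dist_comm A C] at h₂
  rw [bisectorVector, inner_add_left, real_inner_smul_left, real_inner_smul_left]
  linear_combination dist C A * h₁ + dist A B * h₂

theorem bisectorVector_ne_zero (hABC : AffineIndependent ℝ ![A, B, C]) :
    bisectorVector A B C ≠ 0 := by
  have hc := dist_pos_of_affineIndependent hABC
  have hb := dist_pos_of_affineIndependent hABC.reverse_of_three.comm_right
  have hA := dist_add_dist_sub_dist_pos_of_affineIndependent hABC
  have hsq : 0 < ‖bisectorVector A B C‖ ^ 2 := by
    rw [norm_bisectorVector_sq, sq_sub_sq]
    positivity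
  exact norm_ne_zero_iff.1 (sq_pos_iff.1 hsq)

theorem exists_eq_smul_bisectorVector_add (hABC : AffineIndependent ℝ ![A, B, C]) {X : V}
    (hX : Collinear ℝ {A, incenter A B C, X}) : ∃ t : ℝ, X = t • bisectorVector A B C + A := by
  have hs : dist B C + dist C A + dist A B ≠ 0 := by
    have := dist_pos_of_affineIndependent hABC
    positivity
  have hI := incenter_sub_vertex hs
  have hAI : A ≠ incenter A B C := by
    rw [ne_comm, ← sub_ne_zero, hI]
    exact smul_ne_zero (inv_ne_zero hs) (bisectorVector_ne_zero hABC)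
  obtain ⟨r, hr⟩ := mem_affineSpan_pair_iff_exists_lineMap_eq.1
    (hX.mem_affineSpan_of_mem_of_ne (by simp) (by simp) (p₃ := X) (by simp) hAI)
  rw [AffineMap.lineMap_apply, vsub_eq_sub, hI, smul_smul, vadd_eq_add] at hr
  exact ⟨_, hr.symm⟩

theorem eq_midpoint_incenter_excenter (hABC : AffineIndependent ℝ ![A, B, C]) {O X : V}
    (hB : dist O A = dist O B) (hC : dist O A = dist O C) (hX : dist O X = dist O A)
    (hne : X ≠ A) (hcol : Collinear ℝ {A, incenter A B C, X}) :
    X = midpoint ℝ (incenter A B C) (excenter A B C) := by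
  have hc := dist_pos_of_affineIndependent hABC
  have hb := dist_pos_of_affineIndependent hABC.reverse_of_three.comm_right
  have hs : dist B C + dist C A + dist A B ≠ 0 := by positivity
  obtain ⟨t, rfl⟩ := exists_eq_smul_bisectorVector_add hABC hcol
  rw [dist_comm, dist_comm O, ← vadd_eq_add,
    dist_smul_vadd_eq_dist _ _ (bisectorVector_ne_zero hABC)] at hX
  have ht := hX.resolve_left fun h0 => hne (by rw [h0, zero_smul, zero_add])
  rw [midpoint_incenter_excenter hs
      (dist_add_dist_sub_dist_pos_of_affineIndependent hABC).ne',
    ht, vsub_eq_sub, neg_mul, two_mul_inner_bisectorVector hB hC, real_inner_self_eq_norm_sq,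
    norm_bisectorVector_sq, neg_neg, mul_div_mul_left _ _ (by positivity)]

theorem dist_excenter_excenter_sq (hB : dist A B + dist B C - dist C A ≠ 0)
    (hC : dist B C + dist C A - dist A B ≠ 0) :
    dist (excenter B C A) (excenter C A B) ^ 2 =
      4 * dist B C ^ 2 * dist C A * dist A B /
        ((dist A B + dist B C - dist C A) * (dist B C + dist C A - dist A B)) := by
  rw [dist_eq_norm', excenter_sub_excenter hB hC, norm_smul, mul_pow, Real.norm_eq_abs, sq_abs,
    norm_externalBisectorVector_sq]
  field

theorem excenter_ne_excenter (hABC : AffineIndependent ℝ ![A, B, C]) :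
    excenter B C A ≠ excenter C A B := by
  have hBCA := affineIndependent_rotate hABC
  have hCAB := affineIndependent_rotate hBCA
  have hc := dist_pos_of_affineIndependent hABC
  have ha := dist_pos_of_affineIndependent hBCA
  have hb := dist_pos_of_affineIndependent hCAB
  have hB := dist_add_dist_sub_dist_pos_of_affineIndependent hBCA
  have hC := dist_add_dist_sub_dist_pos_of_affineIndependent hCAB
  have hsq : 0 < dist (excenter B C A) (excenter C A B) ^ 2 := by
    rw [dist_excenter_excenter_sq hB.ne' hC.ne']
    positivity
  exact dist_ne_zero.1 (sq_pos_iff.1 hsq)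

theorem centerMass_mittenpunktWeights_excenters (hA : dist C A + dist A B - dist B C ≠ 0)
    (hB : dist A B + dist B C - dist C A ≠ 0) (hC : dist B C + dist C A - dist A B ≠ 0) :
    Finset.univ.centerMass (mittenpunktWeights A B C)
      ![excenter A B C, excenter B C A, excenter C A B] = mittenpunkt A B C := by
  simp only [mittenpunkt, Finset.centerMass, mittenpunktWeights, Fin.sum_univ_three,
    Matrix.cons_val]
  congr 1
  simp only [mul_smul, smul_excenter hA, smul_excenter hB, smul_excenter hC]
  module

theorem symmedianPoint_excenters (hABC : AffineIndependent ℝ ![A, B, C]) :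
    symmedianPoint (excenter A B C) (excenter B C A) (excenter C A B) = mittenpunkt A B C := by
  have hBCA := affineIndependent_rotate hABC
  have hCAB := affineIndependent_rotate hBCA
  have hc := dist_pos_of_affineIndependent hABC
  have ha := dist_pos_of_affineIndependent hBCA
  have hb := dist_pos_of_affineIndependent hCAB
  have hA := dist_add_dist_sub_dist_pos_of_affineIndependent hABC
  have hB := dist_add_dist_sub_dist_pos_of_affineIndependent hBCA
  have hC := dist_add_dist_sub_dist_pos_of_affineIndependent hCAB
  have hweights : ![dist (excenter B C A) (excenter C A B) ^ 2,
      dist (excenter C A B) (excenter A B C) ^ 2, dist (excenter A B C) (excenter B C A) ^ 2] =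
      (4 * dist B C * dist C A * dist A B / ((dist C A + dist A B - dist B C) *
        (dist A B + dist B C - dist C A) * (dist B C + dist C A - dist A B))) •
        mittenpunktWeights A B C := by
    rw [dist_excenter_excenter_sq hB.ne' hC.ne', dist_excenter_excenter_sq hC.ne' hA.ne',
      dist_excenter_excenter_sq hA.ne' hB.ne']
    simp only [mittenpunktWeights, Matrix.smul_cons, smul_eq_mul, Matrix.smul_empty]
    congrm ![?_, ?_, ?_] <;> field
  rw [symmedianPoint, hweights, Finset.centerMass_smul_left _ _ (by positivity),
    centerMass_mittenpunktWeights_excenters hA.ne' hB.ne' hC.ne']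

end ExcentralTriangle

end TriangleCenter

open TriangleCenter

theorem stmt19_general {V : Type*} [NormedAddCommGroup V] [InnerProductSpace ℝ V]
    {A B C O A₁ A₂ A₃ : V} (hABC : AffineIndependent ℝ ![A, B, C])
    (hO : dist O A = dist O B ∧ dist O A = dist O C)
    (hA₁ : dist O A₁ = dist O A ∧ A₁ ≠ A ∧ Collinear ℝ {A, incenter A B C, A₁})
    (hA₂ : dist O A₂ = dist O A ∧ A₂ ≠ B ∧ Collinear ℝ {B, incenter A B C, A₂})
    (hA₃ : dist O A₃ = dist O A ∧ A₃ ≠ C ∧ Collinear ℝ {C, incenter A B C, A₃}) :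
    symmedianPoint A₁ A₂ A₃ = midpoint ℝ (mittenpunkt A B C) (incenter A B C) := by
  obtain ⟨hB, hC⟩ := hO
  obtain ⟨hO₁, hne₁, hcol₁⟩ := hA₁
  obtain ⟨hO₂, hne₂, hcol₂⟩ := hA₂
  obtain ⟨hO₃, hne₃, hcol₃⟩ := hA₃
  have hBCA := affineIndependent_rotate hABC
  have hCAB := affineIndependent_rotate hBCA
  have hI₂ : incenter B C A = incenter A B C := incenter_rotate A B C
  have hI₃ : incenter C A B = incenter A B C := (incenter_rotate B C A).trans hI₂
  rw [← hI₂] at hcol₂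
  rw [← hI₃] at hcol₃
  rw [eq_midpoint_incenter_excenter hABC hB hC hO₁ hne₁ hcol₁,
    eq_midpoint_incenter_excenter hBCA (hB.symm.trans hC) hB.symm (hO₂.trans hB) hne₂ hcol₂,
    eq_midpoint_incenter_excenter hCAB hC.symm (hC.symm.trans hB) (hO₃.trans hC) hne₃ hcol₃,
    hI₂, hI₃, symmedianPoint_midpoint _ (excenter_ne_excenter hCAB),
    symmedianPoint_excenters hABC, midpoint_comm]

theorem bary_eq_centerMass (P Q R : EuclideanSpace ℝ (Fin 2)) (u v w : ℝ) :
    bary P Q R u v w = Finset.univ.centerMass ![u, v, w] ![P, Q, R] := by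
  simp only [bary, Finset.centerMass, Fin.sum_univ_three, Matrix.cons_val]
  module

theorem stmt19 (A B C O : EuclideanSpace ℝ (Fin 2))
    (hABC : AffineIndependent ℝ ![A, B, C])
    (a b c : ℝ) (ha : a = dist B C) (hb : b = dist C A) (hc : c = dist A B)
    (I Mi A₁ A₂ A₃ : EuclideanSpace ℝ (Fin 2))
    (hI : I = bary A B C a b c)
    (hO : dist O A = dist O B ∧ dist O A = dist O C)
    (hMi : Mi = bary A B C (a * (b + c - a)) (b * (c + a - b)) (c * (a + b - c)))
    (hA₁ : dist O A₁ = dist O A ∧ A₁ ≠ A ∧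
      Collinear ℝ ({A, I, A₁} : Set (EuclideanSpace ℝ (Fin 2))))
    (hA₂ : dist O A₂ = dist O A ∧ A₂ ≠ B ∧
      Collinear ℝ ({B, I, A₂} : Set (EuclideanSpace ℝ (Fin 2))))
    (hA₃ : dist O A₃ = dist O A ∧ A₃ ≠ C ∧
      Collinear ℝ ({C, I, A₃} : Set (EuclideanSpace ℝ (Fin 2)))) :
    bary A₁ A₂ A₃ (dist A₂ A₃ ^ 2) (dist A₃ A₁ ^ 2) (dist A₁ A₂ ^ 2) =
      midpoint ℝ Mi I := by
  subst ha hb hc hI hMi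
  simp only [bary_eq_centerMass] at *
  exact stmt19_general hABC hO hA₁ hA₂ hA₃
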